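/- There exists a constant c₂ such that for every ε > 0, one has ∑_{m₁m₂ ≤ x, m₁m₂ a perfect square} s(m₁,m₂) = c₂·x + O_ε(x^{19/28+ε}) as x → ∞, where the sum is over pairs of positive integers (m₁,m₂) with m₁m₂ ≤ x and m₁m₂ a perfect square. -/

import Mathlib

open scoped Classical

/-- `numSubgroups m₁ m₂` is the number of subgroups of the additive group
`ℤ_{m₁} × ℤ_{m₂}`. -/
noncomputable def numSubgroups (m₁ m₂ : ℕ) : ℕ :=
  Nat.card (AddSubgroup (ZMod m₁ × ZMod m₂))

/-- `T₂ x = ∑_{m₁ m₂ ≤ x, m₁ m₂ a perfect square} s(m₁, m₂)`, the sum over pairs of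
positive integers `(m₁, m₂)` with `m₁ m₂ ≤ x` and `m₁ m₂` a perfect square. -/
noncomputable def T₂ (x : ℝ) : ℕ :=
  ∑ p ∈ (Finset.Icc 1 ⌊x⌋₊ ×ˢ Finset.Icc 1 ⌊x⌋₊).filter
      (fun p => p.1 * p.2 ≤ ⌊x⌋₊ ∧ ∃ n : ℕ, p.1 * p.2 = n ^ 2),
    numSubgroups p.1 p.2


/-- The subgroup attached to a triple (A, B, f). -/
def tripleSub {G K : Type*} [AddCommGroup G] [AddCommGroup K]
    (t : Σ p : AddSubgroup G × AddSubgroup K, (p.1 →+ K ⧸ p.2)) : AddSubgroup (G × K) where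
  carrier := {z | ∃ h : z.1 ∈ t.1.1, t.2 ⟨z.1, h⟩ = QuotientAddGroup.mk z.2}
  zero_mem' := ⟨t.1.1.zero_mem, by
    have : (⟨(0 : G × K).1, t.1.1.zero_mem⟩ : t.1.1) = 0 := rfl
    rw [this, map_zero]; rfl⟩
  add_mem' := by
    rintro a b ⟨ha, ha'⟩ ⟨hb, hb'⟩
    refine ⟨t.1.1.add_mem ha hb, ?_⟩
    have : (⟨(a + b).1, t.1.1.add_mem ha hb⟩ : t.1.1) = ⟨a.1, ha⟩ + ⟨b.1, hb⟩ := rfl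
    rw [this, map_add, ha', hb']; rfl
  neg_mem' := by
    rintro a ⟨ha, ha'⟩
    refine ⟨t.1.1.neg_mem ha, ?_⟩
    have : (⟨(-a).1, t.1.1.neg_mem ha⟩ : t.1.1) = -⟨a.1, ha⟩ := rfl
    rw [this, map_neg, ha']; rfl

theorem mem_tripleSub {G K : Type*} [AddCommGroup G] [AddCommGroup K]
    (A : AddSubgroup G) (B : AddSubgroup K) (f : A →+ K ⧸ B) (z : G × K) :
    z ∈ tripleSub ⟨(A, B), f⟩ ↔ ∃ h : z.1 ∈ A, f ⟨z.1, h⟩ = QuotientAddGroup.mk z.2 := Iff.rfl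

theorem tripleSub_injective {G K : Type*} [AddCommGroup G] [AddCommGroup K] :
    Function.Injective (tripleSub (G := G) (K := K)) := by
  rintro ⟨⟨A, B⟩, f⟩ ⟨⟨A', B'⟩, f'⟩ h
  have hz : ∀ z : G × K, (∃ h : z.1 ∈ A, f ⟨z.1, h⟩ = QuotientAddGroup.mk z.2) ↔
      (∃ h : z.1 ∈ A', f' ⟨z.1, h⟩ = QuotientAddGroup.mk z.2) := by
    intro z
    rw [← mem_tripleSub, ← mem_tripleSub, h]
  have hA : A = A' := by
    ext x
    constructor
    · intro hx
      obtain ⟨y, hy⟩ := QuotientAddGroup.mk_surjective (f ⟨x, hx⟩)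
      exact ((hz (x, y)).1 ⟨hx, hy.symm⟩).1
    · intro hx
      obtain ⟨y, hy⟩ := QuotientAddGroup.mk_surjective (f' ⟨x, hx⟩)
      exact ((hz (x, y)).2 ⟨hx, hy.symm⟩).1
  subst hA
  have e0 : ∀ (C : AddSubgroup K) (g : A →+ K ⧸ C) (y : K),
      (∃ h : (0 : G) ∈ A, g ⟨0, h⟩ = QuotientAddGroup.mk y) ↔ y ∈ C := by
    intro C g y
    have : ∀ h : (0 : G) ∈ A, g ⟨0, h⟩ = 0 := fun h => map_zero g
    simp only [this]
    rw [eq_comm, QuotientAddGroup.eq_zero_iff]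
    simp [A.zero_mem]
  have hB : B = B' := by
    ext y
    rw [← e0 B f, ← e0 B' f']
    exact hz (0, y)
  subst hB
  have hf : f = f' := by
    ext ⟨x, hx⟩
    obtain ⟨y, hy⟩ := QuotientAddGroup.mk_surjective (f ⟨x, hx⟩)
    obtain ⟨_, h2⟩ := (hz (x, y)).1 ⟨hx, hy.symm⟩
    rw [← hy, h2]
  rw [hf]

theorem tripleSub_surjective {G K : Type*} [AddCommGroup G] [AddCommGroup K] :
    Function.Surjective (tripleSub (G := G) (K := K)) := by
  intro H
  let A : AddSubgroup G := H.map (AddMonoidHom.fst G K)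
  let B : AddSubgroup K := H.comap (AddMonoidHom.inr G K)
  have hB : ∀ y, y ∈ B ↔ ((0 : G), y) ∈ H := fun y => Iff.rfl
  have hA : ∀ x : A, ∃ y : K, ((x : G), y) ∈ H := by
    rintro ⟨x, ⟨⟨a, b⟩, hz, rfl⟩⟩
    exact ⟨b, hz⟩
  choose s hs using hA
  have key : ∀ (x : A) (y : K), ((x : G), y) ∈ H ↔
      (QuotientAddGroup.mk (s x) : K ⧸ B) = QuotientAddGroup.mk y := by
    intro x y
    rw [QuotientAddGroup.eq, hB]
    constructor
    · intro h
      have := H.add_mem (H.neg_mem (hs x)) h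
      simpa using this
    · intro h
      have := H.add_mem (hs x) h
      simpa using this
  let f : A →+ K ⧸ B := AddMonoidHom.mk' (fun x => (QuotientAddGroup.mk (s x) : K ⧸ B)) (by
    intro a b
    rw [← QuotientAddGroup.mk_add, ← key]
    exact H.add_mem (hs a) (hs b))
  refine ⟨⟨(A, B), f⟩, ?_⟩
  ext ⟨x, y⟩
  rw [mem_tripleSub]
  constructor
  · rintro ⟨h, h'⟩
    exact (key ⟨x, h⟩ y).2 h'
  · intro h
    have hx : x ∈ A := ⟨(x, y), h, rfl⟩
    exact ⟨hx, (key ⟨x, hx⟩ y).1 h⟩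

theorem card_hom_cyclic {A C : Type*} [AddCommGroup A] [AddCommGroup C] [IsAddCyclic A]
    [IsAddCyclic C] [Finite A] [Finite C] :
    Nat.card (A →+ C) = Nat.gcd (Nat.card A) (Nat.card C) := by
  have e : ZMod (Nat.card A) ≃+ A := zmodAddCyclicAddEquiv inferInstance
  have e1 : (A →+ C) ≃ (ZMod (Nat.card A) →+ C) :=
    { toFun := fun f => f.comp e.toAddMonoidHom
      invFun := fun f => f.comp e.symm.toAddMonoidHom
      left_inv := fun f => by ext; simp
      right_inv := fun f => by
        apply AddMonoidHom.ext
        intro x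
        simp }
  have e2 : {f : ℤ →+ C // f (Nat.card A : ℤ) = 0} ≃ (nsmulAddMonoidHom (α := C) (Nat.card A)).ker :=
    Equiv.subtypeEquiv (zmultiplesHom C).symm (by
      intro f
      rw [AddMonoidHom.mem_ker]
      simp only [nsmulAddMonoidHom_apply]
      have : f (Nat.card A : ℤ) = (Nat.card A) • f 1 := by
        rw [← map_nsmul]; simp
      rw [this]; rfl)
  rw [Nat.card_congr e1, ← Nat.card_congr (ZMod.lift (Nat.card A) (A := C)), Nat.card_congr e2,
    IsAddCyclic.card_nsmulAddMonoidHom_ker, Nat.gcd_comm]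

theorem sum_subgroups_cyclic {G : Type*} [AddCommGroup G] [Fintype (AddSubgroup G)] [IsAddCyclic G] [Finite G]
    (F : ℕ → ℕ) : ∑ A : AddSubgroup G, F (Nat.card A) = ∑ d ∈ (Nat.card G).divisors, F d := by
  have hk : ∀ d, d ∣ Nat.card G → Nat.card (nsmulAddMonoidHom (α := G) d).ker = d := by
    intro d hd
    rw [IsAddCyclic.card_nsmulAddMonoidHom_ker, Nat.gcd_eq_right hd]
  have hA : ∀ A : AddSubgroup G, A = (nsmulAddMonoidHom (α := G) (Nat.card A)).ker := by
    intro A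
    apply AddSubgroup.eq_of_le_of_card_ge
    · intro x hx
      rw [AddMonoidHom.mem_ker]
      exact congrArg Subtype.val (card_nsmul_eq_zero' (x := (⟨x, hx⟩ : A)))
    · rw [hk _ (AddSubgroup.card_addSubgroup_dvd_card A)]
  refine Finset.sum_bij' (fun A _ => Nat.card A) (fun d _ => (nsmulAddMonoidHom (α := G) d).ker)
    ?_ ?_ ?_ ?_ ?_
  · intro A _
    exact Nat.mem_divisors.2 ⟨AddSubgroup.card_addSubgroup_dvd_card A, Nat.card_pos.ne'⟩
  · intros; simp
  · intro A _; exact (hA A).symm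
  · intro d hd; exact hk d (Nat.dvd_of_mem_divisors hd)
  · intros; rfl

theorem numSubgroups_eq (m n : ℕ) (hm : m ≠ 0) (hn : n ≠ 0) :
    numSubgroups m n = ∑ d ∈ m.divisors, ∑ e ∈ n.divisors, Nat.gcd d e := by
  have : NeZero m := ⟨hm⟩
  have : NeZero n := ⟨hn⟩
  have : Fintype (AddSubgroup (ZMod m)) := Fintype.ofFinite _
  have : Fintype (AddSubgroup (ZMod n)) := Fintype.ofFinite _
  unfold numSubgroups
  have hfin : ∀ p : AddSubgroup (ZMod m) × AddSubgroup (ZMod n), Finite (p.1 →+ ZMod n ⧸ p.2) :=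
    fun p => Finite.of_injective (fun f => (f : p.1 → ZMod n ⧸ p.2)) DFunLike.coe_injective
  rw [← Nat.card_congr (Equiv.ofBijective _ ⟨tripleSub_injective, tripleSub_surjective⟩),
    Nat.card_sigma, Fintype.sum_prod_type]
  have h1 : ∀ (A : AddSubgroup (ZMod m)) (B : AddSubgroup (ZMod n)),
      Nat.card (A →+ ZMod n ⧸ B) = Nat.gcd (Nat.card A) (n / Nat.card B) := by
    intro A B
    have : IsAddCyclic (ZMod n ⧸ B) :=
      isAddCyclic_of_surjective (QuotientAddGroup.mk' B) (QuotientAddGroup.mk'_surjective B)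
    rw [card_hom_cyclic]
    congr 1
    have := AddSubgroup.card_eq_card_quotient_mul_card_addSubgroup B
    rw [Nat.card_zmod] at this
    exact (Nat.div_eq_of_eq_mul_left Nat.card_pos this).symm
  simp only [h1]
  rw [sum_subgroups_cyclic (G := ZMod m)
    (fun a => ∑ B : AddSubgroup (ZMod n), Nat.gcd a (n / Nat.card B)), Nat.card_zmod]
  refine Finset.sum_congr rfl fun d _ => ?_
  rw [sum_subgroups_cyclic (G := ZMod n) (fun b => Nat.gcd d (n / b)), Nat.card_zmod]
  exact Nat.sum_div_divisors n (fun e => Nat.gcd d e)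
theorem card_filter_dvd (m g : ℕ) (hm : m ≠ 0) (hg : g ∣ m) :
    (m.divisors.filter (fun d => g ∣ d)).card = (m / g).divisors.card := by
  obtain ⟨k, rfl⟩ := hg
  have hg0 : 0 < g := Nat.pos_of_ne_zero (left_ne_zero_of_mul hm)
  rw [Nat.mul_div_cancel_left _ hg0]
  symm
  refine Finset.card_bij (fun d _ => g * d) ?_ ?_ ?_
  · intro d hd
    rw [Nat.mem_divisors] at hd
    simp only [Finset.mem_filter, Nat.mem_divisors]
    exact ⟨⟨Nat.mul_dvd_mul_left g hd.1, hm⟩, Dvd.intro _ rfl⟩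
  · intro a _ b _ h
    exact Nat.eq_of_mul_eq_mul_left hg0 h
  · intro b hb
    simp only [Finset.mem_filter, Nat.mem_divisors] at hb
    obtain ⟨⟨h1, _⟩, c, rfl⟩ := hb
    exact ⟨c, Nat.mem_divisors.2 ⟨Nat.dvd_of_mul_dvd_mul_left hg0 h1, right_ne_zero_of_mul hm⟩, rfl⟩

theorem sum_gcd_eq (m n : ℕ) (hm : m ≠ 0) (hn : n ≠ 0) :
    ∑ d ∈ m.divisors, ∑ e ∈ n.divisors, Nat.gcd d e =
      ∑ g ∈ (Nat.gcd m n).divisors,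
        Nat.totient g * ((m / g).divisors.card * (n / g).divisors.card) := by
  have h1 : ∀ d ∈ m.divisors, ∀ e ∈ n.divisors, Nat.gcd d e =
      ∑ g ∈ (Nat.gcd m n).divisors,
        Nat.totient g * ((if g ∣ d then 1 else 0) * (if g ∣ e then 1 else 0)) := by
    intro d hd e he
    rw [Nat.mem_divisors] at hd he
    rw [← Nat.sum_totient (Nat.gcd d e)]
    have : (Nat.gcd d e).divisors = (Nat.gcd m n).divisors.filter (fun g => g ∣ d ∧ g ∣ e) := by
      ext g
      simp only [Nat.mem_divisors, Finset.mem_filter, Nat.dvd_gcd_iff, ne_eq, Nat.gcd_eq_zero_iff]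
      constructor
      · rintro ⟨⟨a, b⟩, _⟩
        exact ⟨⟨⟨a.trans hd.1, b.trans he.1⟩, by simp [hm]⟩, a, b⟩
      · rintro ⟨_, a, b⟩
        refine ⟨⟨a, b⟩, ?_⟩
        rintro ⟨rfl, _⟩
        exact hm (zero_dvd_iff.1 hd.1)
    rw [this, Finset.sum_filter]
    refine Finset.sum_congr rfl fun g _ => ?_
    by_cases a : g ∣ d <;> by_cases b : g ∣ e <;> simp [a, b]
  rw [Finset.sum_congr rfl fun d hd => Finset.sum_congr rfl fun e he => h1 d hd e he]
  rw [Finset.sum_congr rfl fun d hd => Finset.sum_comm, Finset.sum_comm]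
  refine Finset.sum_congr rfl fun g hg => ?_
  rw [Nat.mem_divisors, Nat.dvd_gcd_iff] at hg
  rw [← card_filter_dvd m g hm hg.1.1, ← card_filter_dvd n g hn hg.1.2]
  simp only [← Finset.mul_sum]
  rw [← Finset.sum_mul]
  simp

/-- Number of quadruples with product the square of `j`. -/
def rfun : ArithmeticFunction ℕ :=
  ⟨fun j => ∑ p ∈ (j ^ 2).divisorsAntidiagonal, p.1.divisors.card * p.2.divisors.card, by simp⟩

/-- Euler's totient as an arithmetic function. -/
def phif : ArithmeticFunction ℕ := ⟨Nat.totient, by simp⟩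

theorem rfun_apply (j : ℕ) : rfun j =
    ∑ p ∈ (j ^ 2).divisorsAntidiagonal, p.1.divisors.card * p.2.divisors.card := rfl

theorem phif_apply (j : ℕ) : phif j = Nat.totient j := rfl

theorem square_sum_eq (k : ℕ) (hk : k ≠ 0) :
    ∑ p ∈ (k ^ 2).divisorsAntidiagonal, ∑ g ∈ (Nat.gcd p.1 p.2).divisors,
        Nat.totient g * ((p.1 / g).divisors.card * (p.2 / g).divisors.card) =
      (phif * rfun) k := by
  rw [ArithmeticFunction.mul_apply]
  simp only [rfun_apply, phif_apply, Finset.mul_sum]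
  rw [Finset.sum_sigma', Finset.sum_sigma']
  refine Finset.sum_bij' (fun x _ => ⟨(x.2, k / x.2), (x.1.1 / x.2, x.1.2 / x.2)⟩)
    (fun y _ => ⟨(y.1.1 * y.2.1, y.1.1 * y.2.2), y.1.1⟩) ?_ ?_ ?_ ?_ ?_
  · rintro ⟨⟨a, b⟩, g⟩ h
    simp only [Finset.mem_sigma, Nat.mem_divisorsAntidiagonal, Nat.mem_divisors,
      Nat.dvd_gcd_iff] at h ⊢
    obtain ⟨⟨h1, h2⟩, ⟨⟨a, rfl⟩, ⟨b, rfl⟩⟩, h3⟩ := h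
    have hgk : g ∣ k := by
      rw [← Nat.pow_dvd_pow_iff (n := 2) (by norm_num), ← h1]
      exact ⟨a * b, by ring⟩
    obtain ⟨j, rfl⟩ := hgk
    have hg : 0 < g := Nat.pos_of_ne_zero (left_ne_zero_of_mul hk)
    have hj : j ≠ 0 := right_ne_zero_of_mul hk
    simp only [Nat.mul_div_cancel_left _ hg]
    refine ⟨⟨trivial, hk⟩, ?_, by positivity⟩
    have : 0 < g ^ 2 := by positivity
    apply Nat.eq_of_mul_eq_mul_left this
    linarith
  · rintro ⟨⟨g, j⟩, ⟨a, b⟩⟩ h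
    simp only [Finset.mem_sigma, Nat.mem_divisorsAntidiagonal, Nat.mem_divisors,
      Nat.dvd_gcd_iff] at h ⊢
    obtain ⟨⟨rfl, _⟩, h2, h3⟩ := h
    have hab : a * b ≠ 0 := by rw [h2]; exact h3
    have hg : g ≠ 0 := left_ne_zero_of_mul hk
    refine ⟨⟨by rw [mul_pow, ← h2]; ring, by positivity⟩, ⟨Dvd.intro _ rfl, Dvd.intro _ rfl⟩, ?_⟩
    rw [ne_eq, Nat.gcd_eq_zero_iff]
    rintro ⟨h, _⟩
    exact (mul_ne_zero hg (left_ne_zero_of_mul hab)) h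
  · rintro ⟨⟨a, b⟩, g⟩ h
    simp only [Finset.mem_sigma, Nat.mem_divisorsAntidiagonal, Nat.mem_divisors,
      Nat.dvd_gcd_iff] at h ⊢
    obtain ⟨⟨h1, h2⟩, ⟨ha, hb⟩, h3⟩ := h
    simp [Nat.mul_div_cancel' ha, Nat.mul_div_cancel' hb]
  · rintro ⟨⟨g, j⟩, ⟨a, b⟩⟩ h
    simp only [Finset.mem_sigma, Nat.mem_divisorsAntidiagonal] at h ⊢
    obtain ⟨⟨rfl, _⟩, h2, h3⟩ := h
    have hg : 0 < g := Nat.pos_of_ne_zero (left_ne_zero_of_mul hk)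
    simp [Nat.mul_div_cancel_left _ hg]
  · rintro ⟨⟨a, b⟩, g⟩ h
    rfl

theorem divisor_bound (δ : ℝ) (hδ : 0 < δ) : ∃ C : ℝ, 1 ≤ C ∧ ∀ n : ℕ, n ≠ 0 →
    (n.divisors.card : ℝ) ≤ C * (n : ℝ) ^ δ := by
  have ht : (1 : ℝ) < 2 ^ δ := Real.one_lt_rpow (by norm_num) hδ
  obtain ⟨C0, hC0⟩ : ∃ C0 : ℝ, C0 = max 1 (1 / ((2 : ℝ) ^ δ - 1)) := ⟨_, rfl⟩
  have hC1 : 1 ≤ C0 := hC0 ▸ le_max_left _ _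
  have hC2 : 1 ≤ C0 * ((2 : ℝ) ^ δ - 1) := by
    have h : 1 / ((2 : ℝ) ^ δ - 1) ≤ C0 := hC0 ▸ le_max_right _ _
    rwa [div_le_iff₀ (by linarith)] at h
  obtain ⟨P, hP⟩ := exists_nat_ge ((2 : ℝ) ^ (1 / δ))
  refine ⟨C0 ^ P, one_le_pow₀ hC1, fun n hn => ?_⟩
  have hterm : ∀ p ∈ n.primeFactors, ((n.factorization p + 1 : ℕ) : ℝ) ≤
      (if p < P then C0 else 1) * ((p : ℝ) ^ δ) ^ (n.factorization p) := by
    intro p hp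
    have hp2 : (2 : ℝ) ≤ p := by exact_mod_cast (Nat.prime_of_mem_primeFactors hp).two_le
    have hpd : (2 : ℝ) ^ δ ≤ (p : ℝ) ^ δ := Real.rpow_le_rpow (by norm_num) hp2 hδ.le
    generalize n.factorization p = a
    split_ifs with h
    · have h1 : 1 + (a : ℝ) * ((2 : ℝ) ^ δ - 1) ≤ (1 + ((2 : ℝ) ^ δ - 1)) ^ a :=
        one_add_mul_le_pow (by linarith) a
      have h2 : (1 + ((2 : ℝ) ^ δ - 1)) ^ a ≤ ((p : ℝ) ^ δ) ^ a :=
        pow_le_pow_left₀ (by linarith) (by linarith) a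
      have h3 : C0 * (1 + (a : ℝ) * ((2 : ℝ) ^ δ - 1)) ≤ C0 * ((p : ℝ) ^ δ) ^ a :=
        mul_le_mul_of_nonneg_left (h1.trans h2) (by linarith)
      have h4 : (a : ℝ) * 1 ≤ a * (C0 * ((2 : ℝ) ^ δ - 1)) :=
        mul_le_mul_of_nonneg_left hC2 (by positivity)
      push_cast
      nlinarith
    · have hpP : (2 : ℝ) ^ (1 / δ) ≤ p := hP.trans (by exact_mod_cast not_lt.1 h)
      have h2 : (2 : ℝ) ≤ (p : ℝ) ^ δ := by
        have := Real.rpow_le_rpow (by positivity) hpP hδ.le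
        rwa [← Real.rpow_mul (by norm_num), one_div_mul_cancel hδ.ne', Real.rpow_one] at this
      have h3 : (2 : ℝ) ^ a ≤ ((p : ℝ) ^ δ) ^ a := pow_le_pow_left₀ (by norm_num) h2 a
      have h4 : ((a + 1 : ℕ) : ℝ) ≤ 2 ^ a := by exact_mod_cast Nat.lt_two_pow_self
      linarith
  have hn2 : (n : ℝ) ^ δ = ∏ p ∈ n.primeFactors, ((p : ℝ) ^ δ) ^ (n.factorization p) := by
    conv_lhs => rw [← Nat.prod_factorization_pow_eq_self hn]
    rw [Finsupp.prod, Nat.support_factorization]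
    push_cast
    rw [← Real.finsetProd_rpow _ _ (fun i _ => by positivity)]
    refine Finset.prod_congr rfl fun p _ => ?_
    rw [← Real.rpow_natCast, ← Real.rpow_natCast, ← Real.rpow_mul (by positivity),
      ← Real.rpow_mul (by positivity), mul_comm]
  rw [Nat.card_divisors hn, hn2, Nat.cast_prod]
  refine (Finset.prod_le_prod (fun _ _ => by positivity) hterm).trans ?_
  rw [Finset.prod_mul_distrib]
  refine mul_le_mul_of_nonneg_right ?_ (Finset.prod_nonneg fun _ _ => by positivity)
  rw [← Finset.prod_filter, Finset.prod_const]
  apply pow_le_pow_right₀ hC1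
  calc _ ≤ (Finset.range P).card := Finset.card_le_card (by
          intro p hp
          simp only [Finset.mem_filter] at hp
          exact Finset.mem_range.2 hp.2)
    _ = P := Finset.card_range P

theorem rfun_bound : ∃ C : ℝ, ∀ j : ℕ, j ≠ 0 → (rfun j : ℝ) ≤ C * (j : ℝ) ^ ((1 : ℝ) / 8) := by
  obtain ⟨C, hC, h⟩ := divisor_bound (1 / 48) (by norm_num)
  refine ⟨C ^ 3, fun j hj => ?_⟩
  have hj1 : (1 : ℝ) ≤ j := by exact_mod_cast Nat.one_le_iff_ne_zero.2 hj
  obtain ⟨y, hy⟩ : ∃ y : ℝ, y = (((j ^ 2 : ℕ) : ℝ)) ^ ((1 : ℝ) / 48) := ⟨_, rfl⟩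
  have hy0 : 0 ≤ y := hy ▸ by positivity
  have hy3 : y ^ 3 = (j : ℝ) ^ ((1 : ℝ) / 8) := by
    rw [hy, Nat.cast_pow, ← Real.rpow_natCast, ← Real.rpow_natCast, ← Real.rpow_mul (by positivity),
      ← Real.rpow_mul (by positivity)]
    norm_num
  have hd : ∀ m : ℕ, m ∣ j ^ 2 → (m.divisors.card : ℝ) ≤ C * y := by
    intro m hm
    have hj2 : j ^ 2 ≠ 0 := pow_ne_zero 2 hj
    refine (h m (ne_zero_of_dvd_ne_zero hj2 hm)).trans ?_
    rw [hy]
    refine mul_le_mul_of_nonneg_left ?_ (by linarith)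
    refine Real.rpow_le_rpow (by positivity) ?_ (by norm_num)
    exact_mod_cast Nat.le_of_dvd (Nat.pos_of_ne_zero hj2) hm
  rw [rfun_apply]
  push_cast
  calc _ ≤ ∑ p ∈ (j ^ 2).divisorsAntidiagonal, (C * y) * (C * y) := by
        refine Finset.sum_le_sum fun p hp => ?_
        rw [Nat.mem_divisorsAntidiagonal] at hp
        exact mul_le_mul (hd _ ⟨_, hp.1.symm⟩) (hd _ ⟨p.1, by rw [← hp.1, mul_comm]⟩)
          (by positivity) (by positivity)
    _ = ((j ^ 2).divisors.card : ℝ) * ((C * y) * (C * y)) := by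
        rw [Finset.sum_const, nsmul_eq_mul, ← Nat.map_div_right_divisors, Finset.card_map]
    _ ≤ (C * y) * ((C * y) * (C * y)) :=
        mul_le_mul_of_nonneg_right (hd _ dvd_rfl) (by positivity)
    _ = _ := by rw [← hy3]; ring

theorem T₂_eq (x : ℝ) : T₂ x = ∑ k ∈ Finset.Ioc 0 (Nat.sqrt ⌊x⌋₊), (phif * rfun) k := by
  unfold T₂
  have h : ∀ k ∈ Finset.Ioc 0 (Nat.sqrt ⌊x⌋₊), (phif * rfun) k =
      ∑ p ∈ (k ^ 2).divisorsAntidiagonal, numSubgroups p.1 p.2 := by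
    intro k hk
    rw [← square_sum_eq k (Finset.mem_Ioc.1 hk).1.ne']
    refine Finset.sum_congr rfl fun p hp => ?_
    rw [Nat.mem_divisorsAntidiagonal] at hp
    have hp0 : p.1 * p.2 ≠ 0 := by rw [hp.1]; exact hp.2
    have h1 := left_ne_zero_of_mul hp0
    have h2 := right_ne_zero_of_mul hp0
    rw [numSubgroups_eq _ _ h1 h2, sum_gcd_eq _ _ h1 h2]
  rw [Finset.sum_congr rfl h, Finset.sum_sigma']
  refine Finset.sum_bij' (fun p _ => ⟨Nat.sqrt (p.1 * p.2), p⟩) (fun y _ => y.2) ?_ ?_ ?_ ?_ ?_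
  · rintro ⟨a, b⟩ hp
    simp only [Finset.mem_filter, Finset.mem_product, Finset.mem_Icc] at hp
    obtain ⟨⟨⟨ha, _⟩, hb, _⟩, hab, n, hn⟩ := hp
    simp only [Finset.mem_sigma, Finset.mem_Ioc, Nat.mem_divisorsAntidiagonal]
    have h0 : 0 < a * b := Nat.mul_pos ha hb
    refine ⟨⟨Nat.sqrt_pos.2 h0, Nat.sqrt_le_sqrt hab⟩, ?_⟩
    rw [hn, Nat.sqrt_eq'] 
    exact ⟨rfl, by rw [← hn]; exact h0.ne'⟩
  · rintro ⟨k, a, b⟩ hp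
    simp only [Finset.mem_sigma, Finset.mem_Ioc, Nat.mem_divisorsAntidiagonal] at hp
    obtain ⟨⟨hk, hk2⟩, hab, hk0⟩ := hp
    have hN : a * b ≤ ⌊x⌋₊ := by
      rw [hab]; exact (Nat.pow_le_pow_left hk2 2).trans (Nat.sqrt_le' _)
    have h0 : a * b ≠ 0 := by rw [hab]; exact hk0
    have ha := Nat.pos_of_ne_zero (left_ne_zero_of_mul h0)
    have hb := Nat.pos_of_ne_zero (right_ne_zero_of_mul h0)
    simp only [Finset.mem_filter, Finset.mem_product, Finset.mem_Icc]
    exact ⟨⟨⟨ha, (Nat.le_mul_of_pos_right a hb).trans hN⟩,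
      hb, (Nat.le_mul_of_pos_left b ha).trans hN⟩, hN, k, hab⟩
  · intros; rfl
  · rintro ⟨k, a, b⟩ hp
    simp only [Finset.mem_sigma, Finset.mem_Ioc, Nat.mem_divisorsAntidiagonal] at hp
    obtain ⟨⟨hk, hk2⟩, hab, hk0⟩ := hp
    simp only [hab, Nat.sqrt_eq']
  · intros; rfl

/-- The convolution of the Moebius function with `rfun`. -/
def ffun : ArithmeticFunction ℤ := ArithmeticFunction.moebius * (rfun : ArithmeticFunction ℤ)

theorem phif_mul_rfun :
    ((phif * rfun : ArithmeticFunction ℕ) : ArithmeticFunction ℤ) =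
      ffun * (ArithmeticFunction.id : ArithmeticFunction ℤ) := by
  have h1 : phif * (ArithmeticFunction.zeta : ArithmeticFunction ℕ) = ArithmeticFunction.id := by
    ext n
    rw [ArithmeticFunction.mul_zeta_apply, ArithmeticFunction.id_apply]
    exact Nat.sum_totient n
  have h2 : (phif : ArithmeticFunction ℤ) * (ArithmeticFunction.zeta : ArithmeticFunction ℤ) =
      (ArithmeticFunction.id : ArithmeticFunction ℤ) := by
    rw [← h1, ArithmeticFunction.natCoe_mul]
  have h3 := ArithmeticFunction.moebius_mul_coe_zeta
  rw [ArithmeticFunction.natCoe_mul, ffun, ← h2]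
  calc _ = (phif : ArithmeticFunction ℤ) * (rfun : ArithmeticFunction ℤ) * 1 := by rw [mul_one]
    _ = _ := by rw [← h3]; ring

theorem T₂_eq2 (x : ℝ) : (T₂ x : ℝ) = ∑ n ∈ Finset.Ioc 0 (Nat.sqrt ⌊x⌋₊),
    (ffun n : ℝ) * (((Nat.sqrt ⌊x⌋₊ / n : ℕ) : ℝ) * (((Nat.sqrt ⌊x⌋₊ / n : ℕ) : ℝ) + 1) / 2) := by
  have h : (T₂ x : ℤ) = ∑ k ∈ Finset.Ioc 0 (Nat.sqrt ⌊x⌋₊),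
      (ffun * (ArithmeticFunction.id : ArithmeticFunction ℤ)) k := by
    rw [T₂_eq, ← phif_mul_rfun, Nat.cast_sum]
    rfl
  rw [ArithmeticFunction.sum_Ioc_mul_eq_sum_sum] at h
  have h' : (T₂ x : ℝ) = ((T₂ x : ℤ) : ℝ) := by push_cast; rfl
  rw [h', h]
  push_cast
  refine Finset.sum_congr rfl fun n _ => ?_
  congr 1
  generalize Nat.sqrt ⌊x⌋₊ / n = q
  induction q with
  | zero => simp
  | succ q ih =>
    rw [Finset.sum_Ioc_succ_top (Nat.zero_le q), ih]
    simp
    ring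

theorem ffun_summable : Summable (fun n : ℕ => |(ffun n : ℝ)| * (n : ℝ) ^ (-(5 / 4 : ℝ))) := by
  obtain ⟨C, hC⟩ := rfun_bound
  have h1 : LSeriesSummable (fun n => ((ArithmeticFunction.moebius n : ℤ) : ℂ)) ((5 / 4 : ℝ) : ℂ) :=
    ArithmeticFunction.LSeriesSummable_moebius_iff.2 (by rw [Complex.ofReal_re]; norm_num)
  have h2 : LSeriesSummable (fun n => ((rfun n : ℕ) : ℂ)) ((5 / 4 : ℝ) : ℂ) := by
    refine LSeriesSummable_of_le_const_mul_rpow (x := 9 / 8) (by rw [Complex.ofReal_re]; norm_num)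
      ⟨C, fun n hn => ?_⟩
    have := hC n hn
    norm_num at this ⊢
    exact this
  have h3 := ArithmeticFunction.LSeriesSummable_mul
    (f := (ArithmeticFunction.moebius : ArithmeticFunction ℂ)) (g := (rfun : ArithmeticFunction ℂ))
    (s := ((5 / 4 : ℝ) : ℂ)) (by simpa using h1) (by simpa using h2)
  have h4 : (ArithmeticFunction.moebius : ArithmeticFunction ℂ) * (rfun : ArithmeticFunction ℂ) =
      (ffun : ArithmeticFunction ℂ) := by
    rw [ffun, ArithmeticFunction.intCoe_mul]
    congr 1
  rw [h4] at h3
  have h5 := h3.norm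
  refine h5.congr fun n => ?_
  rw [LSeries.norm_term_eq]
  split_ifs with hn
  · subst hn; simp
  · rw [Real.rpow_neg (by positivity), Complex.ofReal_re]
    simp [div_eq_mul_inv]

theorem key_bound (y : ℝ) (hy : 0 < y) :
    |(⌊y⌋₊ : ℝ) * ((⌊y⌋₊ : ℝ) + 1) / 2 - y ^ 2 / 2| ≤ y ^ (5 / 4 : ℝ) := by
  have hq1 := Nat.floor_le hy.le
  have hq2 := Nat.lt_floor_add_one y
  rcases lt_or_ge y 1 with h | h
  · rw [Nat.floor_eq_zero.2 h]
    have : y ^ (2 : ℝ) ≤ y ^ (5 / 4 : ℝ) :=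
      Real.rpow_le_rpow_of_exponent_ge hy h.le (by norm_num)
    rw [Real.rpow_two] at this
    rw [abs_le]
    constructor <;> norm_num <;> nlinarith
  · have : y ^ (1 : ℝ) ≤ y ^ (5 / 4 : ℝ) :=
      Real.rpow_le_rpow_of_exponent_le h (by norm_num)
    rw [Real.rpow_one] at this
    have hq0 : (0 : ℝ) ≤ ⌊y⌋₊ := by positivity
    refine le_trans ?_ this
    rw [abs_le]
    constructor <;> nlinarith

theorem main_bound (x : ℝ) (hx : 1 ≤ x) :
    |(T₂ x : ℝ) - (∑' n : ℕ, (ffun n : ℝ) / (n : ℝ) ^ 2 / 2) * x| ≤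
      (∑' n : ℕ, |(ffun n : ℝ)| * (n : ℝ) ^ (-(5 / 4 : ℝ))) * x ^ (5 / 8 : ℝ) := by
  have hS := ffun_summable
  obtain ⟨X, hX⟩ : ∃ X : ℝ, X = √x := ⟨_, rfl⟩
  have hX2 : X ^ 2 = x := by rw [hX]; exact Real.sq_sqrt (by linarith)
  have hX0 : 0 < X := by rw [hX]; exact Real.sqrt_pos.2 (by linarith)
  have hK : Nat.sqrt ⌊x⌋₊ = ⌊X⌋₊ := by
    symm
    rw [Nat.eq_sqrt', Nat.le_floor_iff (by linarith), Nat.floor_lt (by linarith)]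
    have h1 := Nat.floor_le hX0.le
    have h2 := Nat.lt_floor_add_one X
    push_cast
    constructor <;> nlinarith
  have hX5 : x ^ (5 / 8 : ℝ) = X ^ (5 / 4 : ℝ) := by
    rw [← hX2, ← Real.rpow_natCast, ← Real.rpow_mul hX0.le]
    norm_num
  have hsm : Summable (fun n : ℕ => (ffun n : ℝ) / (n : ℝ) ^ 2 / 2) := by
    refine Summable.of_norm_bounded hS fun n => ?_
    rcases Nat.eq_zero_or_pos n with rfl | hn
    · simp
    · have hn1 : (1 : ℝ) ≤ n := by exact_mod_cast hn
      rw [Real.norm_eq_abs, abs_div, abs_div, div_div, div_eq_mul_inv]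
      refine mul_le_mul_of_nonneg_left ?_ (abs_nonneg _)
      rw [Real.rpow_neg (by positivity)]
      apply inv_anti₀ (by positivity)
      have : (n : ℝ) ^ (5 / 4 : ℝ) ≤ (n : ℝ) ^ (2 : ℝ) :=
        Real.rpow_le_rpow_of_exponent_le hn1 (by norm_num)
      rw [Real.rpow_two] at this
      rw [abs_of_pos (by positivity : (0 : ℝ) < (n : ℝ) ^ 2), abs_of_pos (by norm_num : (0 : ℝ) < 2)]
      nlinarith [sq_nonneg (n : ℝ)]
  have hT : HasSum (fun n : ℕ => (ffun n : ℝ) * ((⌊X / n⌋₊ : ℝ) * ((⌊X / n⌋₊ : ℝ) + 1) / 2))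
      (T₂ x : ℝ) := by
    rw [T₂_eq2, hK]
    have : ∀ n : ℕ, ⌊X⌋₊ / n = ⌊X / n⌋₊ := fun n => (Nat.floor_div_natCast X n).symm
    simp only [this]
    apply hasSum_sum_of_ne_finset_zero
    intro n hn
    rcases Nat.eq_zero_or_pos n with rfl | h0
    · simp
    · have : ⌊X / n⌋₊ = 0 := by
        rw [Nat.floor_eq_zero, div_lt_one (by positivity)]
        by_contra hc
        exact hn (Finset.mem_Ioc.2 ⟨h0, Nat.le_floor (not_lt.1 hc)⟩)
      rw [this]; simp
  have hD := hT.sub (hsm.hasSum.mul_right x)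
  rw [← hD.tsum_eq, ← Real.norm_eq_abs, ← tsum_mul_right]
  refine tsum_of_norm_bounded (hS.mul_right _).hasSum fun n => ?_
  rcases Nat.eq_zero_or_pos n with rfl | hn
  · simp
  · have hn0 : (0 : ℝ) < n := by exact_mod_cast hn
    have hk := key_bound (X / n) (by positivity)
    have e : (ffun n : ℝ) * ((⌊X / n⌋₊ : ℝ) * ((⌊X / n⌋₊ : ℝ) + 1) / 2) -
        (ffun n : ℝ) / (n : ℝ) ^ 2 / 2 * x =
        (ffun n : ℝ) * ((⌊X / n⌋₊ : ℝ) * ((⌊X / n⌋₊ : ℝ) + 1) / 2 - (X / n) ^ 2 / 2) := by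
      rw [← hX2]; field_simp
    rw [e, Real.norm_eq_abs, abs_mul, hX5, mul_assoc]
    refine mul_le_mul_of_nonneg_left (hk.trans (le_of_eq ?_)) (abs_nonneg _)
    rw [Real.div_rpow hX0.le hn0.le, Real.rpow_neg hn0.le]
    ring

theorem stmt0 : ∃ c₂ : ℝ, ∀ ε : ℝ, 0 < ε →
    (fun x : ℝ => (T₂ x : ℝ) - c₂ * x) =O[Filter.atTop]
      (fun x : ℝ => x ^ ((19 : ℝ) / 28 + ε)) := by
  refine ⟨∑' n : ℕ, (ffun n : ℝ) / (n : ℝ) ^ 2 / 2, fun ε hε => ?_⟩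
  refine Asymptotics.IsBigO.of_bound (∑' n : ℕ, |(ffun n : ℝ)| * (n : ℝ) ^ (-(5 / 4 : ℝ))) ?_
  filter_upwards [Filter.eventually_ge_atTop (1 : ℝ)] with x hx
  rw [Real.norm_eq_abs, Real.norm_eq_abs, abs_of_pos (Real.rpow_pos_of_pos (by linarith) _)]
  refine (main_bound x hx).trans (mul_le_mul_of_nonneg_left ?_ ?_)
  · exact Real.rpow_le_rpow_of_exponent_le hx (by linarith)
  · exact tsum_nonneg fun n => by positivity
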